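/- arXiv:0902.3860 — 3 statements merged into one kernel-verified Lean document; each statement's English description precedes it below -/
import Mathlib

section
/- Let Γ be a distance-regular graph with valency k, diameter D ≥ 2, intersection numbers a₁, c₂, and set α = ⌈k/(a₁+1)⌉. Then c₂ - 1 ≥ (α(a₁+1) - k) / C(α,2). -/
open Finset SimpleGraph

/-- `G` is a distance-regular graph with diameter `D` and intersection numbers
`b i`, `c i`, `a i` (so valency `k = b 0` and `a i = k - b i - c i`). -/
structure IsDRG {V : Type*} [Fintype V] (G : SimpleGraph V) (D : ℕ)
    (b c a : ℕ → ℕ) : Prop where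
  connected : G.Connected
  le_diam : ∀ x y : V, G.dist x y ≤ D
  exists_diam : ∃ x y : V, G.dist x y = D
  card_b : ∀ i, i ≤ D → ∀ x y : V, G.dist x y = i →
      Nat.card {z : V | G.Adj y z ∧ G.dist x z = i + 1} = b i
  card_c : ∀ i, i ≤ D → ∀ x y : V, G.dist x y = i →
      Nat.card {z : V | G.Adj y z ∧ G.dist x z = i - 1} = c i
  card_a : ∀ i, i ≤ D → ∀ x y : V, G.dist x y = i →
      Nat.card {z : V | G.Adj y z ∧ G.dist x z = i} = a i

/-- The second Bonferroni inequality for a family of sets of equal size with bounded pairwise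
intersections. -/
theorem card_mul_le_card_biUnion_add_choose_two_mul {ι β : Type*} [DecidableEq ι] [DecidableEq β]
    (A : ι → Finset β) (r m : ℕ) (T : Finset ι) (hr : ∀ t ∈ T, #(A t) = r)
    (hm : ∀ s ∈ T, ∀ t ∈ T, s ≠ t → #(A s ∩ A t) ≤ m) :
    #T * r ≤ #(T.biUnion A) + (#T).choose 2 * m := by
  induction T using Finset.induction_on with
  | empty => simp
  | insert y T hy ih =>
    have ih' := ih (fun t ht => hr t (mem_insert_of_mem ht))
      (fun s hs t ht => hm s (mem_insert_of_mem hs) t (mem_insert_of_mem ht))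
    have hinter : #(A y ∩ T.biUnion A) ≤ #T * m := by
      rw [inter_biUnion]
      refine card_biUnion_le_card_mul _ _ _ fun t ht => ?_
      exact hm y (mem_insert_self _ _) t (mem_insert_of_mem ht) (fun h => hy (h ▸ ht))
    have hunion := card_union_add_card_inter (A y) (T.biUnion A)
    have hy' := hr y (mem_insert_self _ _)
    rw [biUnion_insert, card_insert_of_notMem hy, Nat.choose_succ_succ' (#T) 1, Nat.choose_one_right]
    nlinarith

/-- A finite set contains a subset of pairwise unrelated elements that dominates it. -/
theorem exists_indep_dominating {β : Type*} (N : Finset β) (R : β → β → Prop)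
    (hR : ∀ {s t}, R s t → R t s) :
    ∃ I ⊆ N, (∀ s ∈ I, ∀ t ∈ I, s ≠ t → ¬ R s t) ∧ ∀ z ∈ N, ∃ t ∈ I, z = t ∨ R t z := by
  classical
  obtain ⟨I, hI, hmax⟩ := exists_max_image
    (N.powerset.filter fun I => ∀ s ∈ I, ∀ t ∈ I, s ≠ t → ¬ R s t) card ⟨∅, by simp⟩
  simp only [mem_filter, mem_powerset] at hI hmax
  refine ⟨I, hI.1, hI.2, fun z hz => ?_⟩
  by_contra! hcon
  have hzI : z ∉ I := fun h => (hcon z h).1 rfl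
  have hle := hmax (insert z I) ⟨insert_subset hz hI.1, fun s hs t ht hst => by
    rcases mem_insert.1 hs with rfl | hsI <;> rcases mem_insert.1 ht with rfl | htI
    · exact absurd rfl hst
    · exact fun h => (hcon t htI).2 (hR h)
    · exact (hcon s hsI).2
    · exact hI.2 s hsI t htI hst⟩
  rw [card_insert_of_notMem hzI] at hle
  omega

theorem SimpleGraph.dist_eq_two_of_common_neighbor {V : Type*} {G : SimpleGraph V} {x y z : V}
    (hxy : G.Adj x y) (hxz : G.Adj x z) (hne : y ≠ z) (hyz : ¬ G.Adj y z) : G.dist y z = 2 := by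
  have hle : G.dist y z ≤ 2 :=
    dist_le (Walk.cons hxy.symm (Walk.cons hxz Walk.nil))
  have hreach : G.Reachable y z := hxy.symm.reachable.trans hxz.reachable
  have h0 := hreach.pos_dist_of_ne hne
  have h1 : G.dist y z ≠ 1 := fun h => hyz (dist_eq_one_iff_adj.1 h)
  omega

namespace IsDRG

variable {V : Type*} [Fintype V] {G : SimpleGraph V} {D : ℕ} {b c a : ℕ → ℕ}

theorem exists_nonadj_neighbors (hD : 2 ≤ D) (hG : IsDRG G D b c a) :
    ∃ x y z : V, G.Adj x y ∧ G.Adj x z ∧ y ≠ z ∧ ¬ G.Adj y z := by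
  obtain ⟨u, v, huv⟩ := hG.exists_diam
  obtain ⟨p, hp⟩ := hG.connected.exists_walk_length_eq_dist u v
  cases p with
  | nil => simp at huv; omega
  | @cons _ x _ hux q =>
    cases q with
    | nil => simp at hp; omega
    | @cons _ w _ hxw q =>
      simp only [Walk.length_cons] at hp
      refine ⟨x, u, w, hux.symm, hxw, ?_, fun huw => ?_⟩
      · rintro rfl
        have := dist_le q
        omega
      · have := dist_le (Walk.cons huw q)
        rw [Walk.length_cons] at this
        omega

open scoped Classical in
theorem card_neighbors (hG : IsDRG G D b c a) (x : V) : #{z | G.Adj x z} = b 0 := by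
  rw [← hG.card_b 0 (Nat.zero_le _) x x (by simp), Nat.card_eq_fintype_card, Fintype.card_subtype]
  congr 1
  ext z
  simp

open scoped Classical in
theorem card_closed_local_neighbors (hD : 2 ≤ D) (hG : IsDRG G D b c a) {x y : V}
    (hxy : G.Adj x y) : #{z | G.Adj x z ∧ (z = y ∨ G.Adj y z)} = a 1 + 1 := by
  rw [← hG.card_a 1 (by omega) x y (dist_eq_one_iff_adj.2 hxy), Nat.card_eq_fintype_card,
    Fintype.card_subtype,
    ← card_insert_of_notMem (a := y) (by simp)]
  congr 1
  ext z
  simp only [mem_filter, mem_univ, true_and, mem_insert, Set.mem_ofPred_eq, dist_eq_one_iff_adj]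
  constructor
  · tauto
  · rintro (rfl | h)
    · exact ⟨hxy, Or.inl rfl⟩
    · exact ⟨h.2, Or.inr h.1⟩

open scoped Classical in
theorem card_inter_closed_local_neighbors (hD : 2 ≤ D) (hG : IsDRG G D b c a) {x y z : V}
    (hxy : G.Adj x y) (hxz : G.Adj x z) (hne : y ≠ z) (hyz : ¬ G.Adj y z) :
    #(({w | G.Adj x w ∧ (w = y ∨ G.Adj y w)} : Finset V) ∩
      ({w | G.Adj x w ∧ (w = z ∨ G.Adj z w)} : Finset V)) + 1 ≤ c 2 := by
  rw [← hG.card_c 2 hD y z (dist_eq_two_of_common_neighbor hxy hxz hne hyz),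
    Nat.card_eq_fintype_card, Fintype.card_subtype,
    ← card_insert_of_notMem (a := x) (by simp)]
  refine card_le_card fun w hw => ?_
  have hzy : ¬ G.Adj z y := fun h => hyz h.symm
  simp only [mem_filter, mem_univ, true_and, mem_insert, mem_inter, Set.mem_ofPred_eq,
    Nat.add_one_sub_one, dist_eq_one_iff_adj] at hw ⊢
  rcases hw with rfl | ⟨⟨_, rfl | h1⟩, _, rfl | h2⟩
  · exact ⟨hxz.symm, hxy.symm⟩
  · exact absurd rfl hne
  · exact absurd h2 hzy
  · exact absurd h1 hyz
  · exact ⟨h2, h1⟩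

end IsDRG

/-- For a distance-regular graph with diameter `D ≥ 2` and `α = ⌈k/(a₁+1)⌉`, one has
`c₂ - 1 ≥ (α(a₁+1) - k) / C(α,2)`. -/
theorem stmt1 {V : Type*} [Fintype V] (G : SimpleGraph V) (D : ℕ) (b c a : ℕ → ℕ)
    (hD : 2 ≤ D) (hG : IsDRG G D b c a)
    (α : ℕ) (hα : (α : ℤ) = ⌈(b 0 : ℚ) / ((a 1 : ℚ) + 1)⌉) :
    ((c 2 : ℝ) - 1) ≥ ((α : ℝ) * (a 1 + 1) - b 0) / (α.choose 2 : ℝ) := by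
  classical
  obtain ⟨x, y, z, hxy, hxz, hne, hyz⟩ := hG.exists_nonadj_neighbors hD
  have hk := hG.card_neighbors x
  let A : V → Finset V := fun y => {w | G.Adj x w ∧ (w = y ∨ G.Adj y w)}
  have hcard : ∀ t, G.Adj x t → #(A t) = a 1 + 1 := fun t ht =>
    hG.card_closed_local_neighbors hD ht
  have hinter : ∀ s t, G.Adj x s → G.Adj x t → s ≠ t → ¬ G.Adj s t → #(A s ∩ A t) + 1 ≤ c 2 :=
    fun s t hs ht hst h => hG.card_inter_closed_local_neighbors hD hs ht hst h
  have hc : 1 ≤ c 2 := le_trans (Nat.le_add_left _ _) (hinter y z hxy hxz hne hyz)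
  have hlt : a 1 + 1 < b 0 := by
    rw [← hk, ← hcard y hxy]
    refine card_lt_card ((Finset.ssubset_iff_of_subset fun w hw => ?_).2 ⟨z, ?_, ?_⟩)
    · simp only [A, mem_filter, mem_univ, true_and] at hw ⊢
      exact hw.1
    · simpa using hxz
    · simp [A, hyz, hne.symm]
  have hα2 : 2 ≤ α := by
    have h : (1 : ℤ) < α := by
      rw [hα, Int.lt_ceil, lt_div_iff₀ (by positivity)]
      push_cast
      rw [one_mul]
      exact_mod_cast hlt
    omega
  obtain ⟨I, hIN, hind, hdom⟩ :=
    exists_indep_dominating ({w | G.Adj x w} : Finset V) G.Adj (fun h => h.symm)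
  have hadj : ∀ t ∈ I, G.Adj x t := fun t ht => by simpa using hIN ht
  have hkI : b 0 ≤ #I * (a 1 + 1) := by
    rw [← hk]
    refine le_trans (card_le_card fun w hw => ?_)
      (card_biUnion_le_card_mul I A _ fun t ht => (hcard t (hadj t ht)).le)
    obtain ⟨t, ht, hwt⟩ := hdom w hw
    exact mem_biUnion.2 ⟨t, ht, by simpa [A, hwt] using hw⟩
  have hαI : α ≤ #I := by
    have h : (α : ℤ) ≤ (#I : ℤ) := by
      rw [hα, Int.ceil_le, div_le_iff₀ (by positivity)]
      exact_mod_cast hkI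
    exact_mod_cast h
  obtain ⟨T, hTI, rfl⟩ := exists_subset_card_eq hαI
  have hbonf := card_mul_le_card_biUnion_add_choose_two_mul A (a 1 + 1) (c 2 - 1) T
    (fun t ht => hcard t (hadj t (hTI ht)))
    (fun s hs t ht hst => Nat.le_sub_one_of_lt (hinter s t (hadj s (hTI hs)) (hadj t (hTI ht)) hst
      (hind s (hTI hs) t (hTI ht) hst)))
  have hU : #(T.biUnion A) ≤ b 0 := by
    rw [← hk]
    refine card_le_card (biUnion_subset.2 fun t _ w hw => ?_)
    simp only [A, mem_filter, mem_univ, true_and] at hw ⊢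
    exact hw.1
  have hchoose : (0 : ℝ) < ((#T).choose 2 : ℝ) := by exact_mod_cast Nat.choose_pos hα2
  have hfinal : ((#T * (a 1 + 1) : ℕ) : ℝ) ≤ ((b 0 + (#T).choose 2 * (c 2 - 1) : ℕ) : ℝ) := by
    exact_mod_cast hbonf.trans (Nat.add_le_add_right hU _)
  push_cast [Nat.cast_sub hc] at hfinal
  rw [ge_iff_le, div_le_iff₀ hchoose]
  linarith
end

section
/- Let Γ be a Shilla distance-regular graph with b = b(Γ) ≥ 2 and m₂ = m₃. If b₂ = c₂, then a₃ = b(b-1)/2 (and c₂ = b(b-1)/4). -/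
open Finset SimpleGraph

/-- `θ` is an eigenvalue of the adjacency matrix of `G`. -/
def IsEig {V : Type*} [Fintype V] [DecidableEq V] (G : SimpleGraph V)
    [DecidableRel G.Adj] (θ : ℝ) : Prop :=
  ∃ v : V → ℝ, v ≠ 0 ∧ (G.adjMatrix ℝ).mulVec v = θ • v

/-- `θ` is the second largest eigenvalue of `G` (`k` being the largest). -/
def IsSecondLargestEig {V : Type*} [Fintype V] [DecidableEq V] (G : SimpleGraph V)
    [DecidableRel G.Adj] (k θ : ℝ) : Prop :=
  IsEig G θ ∧ θ < k ∧ ∀ η : ℝ, IsEig G η → η ≠ k → η ≤ θ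

/-- `θ` is the smallest eigenvalue of `G`. -/
def IsSmallestEig {V : Type*} [Fintype V] [DecidableEq V] (G : SimpleGraph V)
    [DecidableRel G.Adj] (θ : ℝ) : Prop :=
  IsEig G θ ∧ ∀ η : ℝ, IsEig G η → θ ≤ η

/-- The multiplicity of `θ` as an eigenvalue of the adjacency matrix of `G`. -/
noncomputable def eigMult {V : Type*} [Fintype V] [DecidableEq V] (G : SimpleGraph V)
    [DecidableRel G.Adj] (θ : ℝ) : ℕ :=
  Module.finrank ℝ ↥(Module.End.eigenspace (Matrix.toLin' (G.adjMatrix ℝ)) θ)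

/-- A Shilla distance-regular graph: diameter `3` and second largest eigenvalue `a 3`. -/
structure IsShilla {V : Type*} [Fintype V] [DecidableEq V] (G : SimpleGraph V)
    [DecidableRel G.Adj] (b c a : ℕ → ℕ) : Prop where
  drg : IsDRG G 3 b c a
  second : IsSecondLargestEig G (b 0) ((a 3 : ℝ))


section Spectral

variable {V : Type*} [Fintype V] [DecidableEq V]

theorem Matrix.IsHermitian.trace_mul_self_eq_sum_eigenvalues_sq {A : Matrix V V ℝ}
    (hA : A.IsHermitian) : (A * A).trace = ∑ i, hA.eigenvalues i ^ 2 := by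
  conv_lhs => rw [hA.spectral_theorem, ← map_mul, Unitary.conjStarAlgAut_apply,
    Matrix.trace_mul_cycle, Unitary.coe_star_mul_self, one_mul, Matrix.diagonal_mul_diagonal,
    Matrix.trace_diagonal]
  simp [sq]

theorem Matrix.IsHermitian.card_eigenvalues_eq {A : Matrix V V ℝ} (hA : A.IsHermitian) (θ : ℝ) :
    #{i | hA.eigenvalues i = θ} =
      Module.finrank ℝ ↥(Module.End.eigenspace (Matrix.toLin' A) θ) := by
  have hT := Matrix.isSymmetric_toEuclideanLin_iff.mpr hA
  have h1 : #{i | hA.eigenvalues i = θ} = #{i | hA.eigenvalues₀ i = θ} := by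
    apply Finset.card_equiv (Fintype.equivOfCardEq (Fintype.card_fin _)).symm
    exact fun i => by rw [Finset.mem_filter_univ, Finset.mem_filter_univ]; rfl
  rw [h1]
  refine (hT.card_filter_eigenvalues_eq finrank_euclideanSpace θ).trans ?_
  have h2 : Module.End.eigenspace (Matrix.toLin' A) θ =
      (Module.End.eigenspace (Matrix.toEuclideanLin A) θ).map
        (WithLp.linearEquiv 2 ℝ (V → ℝ)).toLinearMap := by
    ext v
    simp only [Submodule.mem_map_equiv, Module.End.mem_eigenspace_iff]
    rw [← (WithLp.linearEquiv 2 ℝ (V → ℝ)).injective.eq_iff]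
    simp [Matrix.toLpLin_apply]
  rw [h2, LinearEquiv.finrank_map_eq]

theorem isHermitian_adjMatrix {V : Type*} {G : SimpleGraph V} [DecidableRel G.Adj] :
    (G.adjMatrix ℝ).IsHermitian := by
  rw [Matrix.IsHermitian, Matrix.conjTranspose_eq_transpose_of_trivial, transpose_adjMatrix]

variable {G : SimpleGraph V} [DecidableRel G.Adj]

theorem isEig_eigenvalues (i : V) :
    IsEig G ((isHermitian_adjMatrix (G := G)).eigenvalues i) :=
  ⟨_, (WithLp.ofLp_eq_zero 2).ne.2 <|
    isHermitian_adjMatrix.eigenvectorBasis.orthonormal.ne_zero i,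
    isHermitian_adjMatrix.mulVec_eigenvectorBasis i⟩

theorem sum_eigenvalues_eq_sum_eigMult {s : Finset ℝ} (hs : ∀ θ, IsEig G θ → θ ∈ s)
    (f : ℝ → ℝ) :
    ∑ i, f ((isHermitian_adjMatrix (G := G)).eigenvalues i) = ∑ θ ∈ s, eigMult G θ * f θ := by
  rw [← Finset.sum_fiberwise_of_maps_to' (t := s) (fun i _ => hs _ (isEig_eigenvalues i))]
  refine Finset.sum_congr rfl fun θ _ => ?_
  rw [eigMult, ← (isHermitian_adjMatrix (G := G)).card_eigenvalues_eq, Finset.sum_const,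
    nsmul_eq_mul]

end Spectral

theorem SimpleGraph.Connected.exists_adj_dist_eq {V : Type*} {G : SimpleGraph V}
    (hG : G.Connected) {x y : V} {n : ℕ} (h : G.dist x y = n + 1) :
    ∃ z, G.Adj y z ∧ G.dist x z = n := by
  rw [SimpleGraph.dist_comm] at h
  obtain ⟨p, hp⟩ := hG.exists_walk_length_eq_dist y x
  cases p with
  | nil => simp at h
  | @cons _ z _ hyz q =>
    refine ⟨z, hyz, ?_⟩
    have h1 := hG.dist_triangle (u := y) (v := z) (w := x)
    have h2 := SimpleGraph.dist_eq_one_iff_adj.mpr hyz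
    have h3 := SimpleGraph.dist_le q
    rw [SimpleGraph.Walk.length_cons] at hp
    rw [SimpleGraph.dist_comm]
    lia

/-- The number of neighbours at distance `j` from `x` of a vertex at distance `i` from `x`, in a
distance-regular graph with intersection numbers `b`, `c`, `a`. -/
def neighborCount (b c a : ℕ → ℕ) (i j : ℕ) : ℕ :=
  if j = i + 1 then b i else if j = i then a i else if j + 1 = i then c i else 0

theorem natCard_neighbors {V : Type*} [Fintype V] {G : SimpleGraph V} [DecidableRel G.Adj]
    (x y : V) (j : ℕ) :
    Nat.card {z : V | G.Adj y z ∧ G.dist x z = j} = #{z ∈ G.neighborFinset y | G.dist x z = j} := by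
  rw [Nat.card_coe_set_eq, ← Set.ncard_coe_finset]
  congr 1
  ext z
  simp

/-- The sum of `v` over the vertices at distance `i` from `x`. -/
noncomputable def sphereSum {V : Type*} [Fintype V] (G : SimpleGraph V) (x : V) (v : V → ℝ)
    (i : ℕ) : ℝ :=
  ∑ z with G.dist x z = i, v z

namespace IsDRG

section

variable {V : Type*} [Fintype V] {G : SimpleGraph V} {D : ℕ} {b c a : ℕ → ℕ}

theorem card_neighbors_dist [DecidableRel G.Adj] (h : IsDRG G D b c a) (x y : V) (j : ℕ) :
    #{z ∈ G.neighborFinset y | G.dist x z = j} = neighborCount b c a (G.dist x y) j := by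
  have hi := h.le_diam x y
  rw [← natCard_neighbors, neighborCount]
  split_ifs with h1 h2 h3
  · subst h1; exact h.card_b _ hi x y rfl
  · subst h2; exact h.card_a _ hi x y rfl
  · obtain rfl : j = G.dist x y - 1 := by lia
    exact h.card_c _ hi x y rfl
  · rw [Nat.card_coe_set_eq, Set.ncard_eq_zero, Set.eq_empty_iff_forall_notMem]
    rintro z ⟨hyz, rfl⟩
    have h4 := SimpleGraph.dist_eq_one_iff_adj.mpr hyz
    have h5 := h.connected.dist_triangle (u := x) (v := y) (w := z)
    have h6 := h.connected.dist_triangle (u := x) (v := z) (w := y)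
    rw [SimpleGraph.dist_comm (u := z)] at h6
    lia

theorem degree_eq [DecidableRel G.Adj] (h : IsDRG G D b c a) (x : V) : G.degree x = b 0 := by
  rw [← h.card_b 0 (Nat.zero_le _) x x SimpleGraph.dist_self, natCard_neighbors,
    Finset.filter_true_of_mem, SimpleGraph.card_neighborFinset_eq_degree]
  intro z hz
  exact SimpleGraph.dist_eq_one_iff_adj.mpr ((G.mem_neighborFinset _ _).mp hz)

theorem sum_neighborCount [DecidableRel G.Adj] (h : IsDRG G D b c a) (x y : V) :
    ∑ j ∈ range (D + 1), neighborCount b c a (G.dist x y) j = b 0 := by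
  simp_rw [← h.degree_eq y, ← h.card_neighbors_dist, ← SimpleGraph.card_neighborFinset_eq_degree]
  refine (Finset.card_eq_sum_card_fiberwise fun z _ => ?_).symm
  simpa [Nat.lt_succ_iff] using h.le_diam x z

theorem exists_dist_eq (h : IsDRG G D b c a) {i : ℕ} (hi : i ≤ D) : ∃ x y, G.dist x y = i := by
  induction hi using Nat.decreasingInduction with
  | self => exact h.exists_diam
  | of_succ i _ ih =>
    obtain ⟨x, y, hxy⟩ := ih
    obtain ⟨z, -, hz⟩ := h.connected.exists_adj_dist_eq hxy
    exact ⟨x, z, hz⟩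

theorem b_pos (h : IsDRG G D b c a) {i : ℕ} (hi : i < D) : 0 < b i := by
  obtain ⟨x, y, hxy⟩ := h.exists_dist_eq (i := i + 1) hi
  obtain ⟨z, hyz, hz⟩ := h.connected.exists_adj_dist_eq hxy
  rw [← h.card_b i hi.le x z hz, Nat.card_pos_iff]
  exact ⟨⟨y, hyz.symm, hxy⟩, inferInstance⟩

theorem c_succ_pos (h : IsDRG G D b c a) {i : ℕ} (hi : i < D) : 0 < c (i + 1) := by
  obtain ⟨x, y, hxy⟩ := h.exists_dist_eq (i := i + 1) hi
  obtain ⟨z, hyz, hz⟩ := h.connected.exists_adj_dist_eq hxy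
  rw [← h.card_c (i + 1) hi x y hxy, Nat.card_pos_iff]
  exact ⟨⟨z, hyz, hz⟩, inferInstance⟩

theorem a_zero (h : IsDRG G D b c a) : a 0 = 0 := by
  obtain ⟨x, -⟩ := h.exists_diam
  rw [← h.card_a 0 (Nat.zero_le _) x x SimpleGraph.dist_self, Nat.card_coe_set_eq,
    Set.ncard_eq_zero, Set.eq_empty_iff_forall_notMem]
  rintro z ⟨hxz, hz⟩
  exact hxz.ne (h.connected.dist_eq_zero_iff.mp hz)

theorem c_one (h : IsDRG G D b c a) (hD : 1 ≤ D) : c 1 = 1 := by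
  obtain ⟨x, y, hxy⟩ := h.exists_dist_eq hD
  rw [← h.card_c 1 hD x y hxy, Nat.card_coe_set_eq, Set.ncard_eq_one]
  refine ⟨x, Set.eq_singleton_iff_unique_mem.mpr ⟨⟨?_, SimpleGraph.dist_self⟩, ?_⟩⟩
  · exact (SimpleGraph.dist_eq_one_iff_adj.mp hxy).symm
  · exact fun z hz => (h.connected.dist_eq_zero_iff.mp hz.2).symm

theorem sphereSum_zero (h : IsDRG G D b c a) (x : V) (v : V → ℝ) : sphereSum G x v 0 = v x := by
  rw [sphereSum, Finset.sum_eq_single x]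
  · exact fun z hz hne => (hne (h.connected.dist_eq_zero_iff.mp (by simpa using hz)).symm).elim
  · simp

theorem sum_sphereSum (h : IsDRG G D b c a) (x : V) (v : V → ℝ) :
    ∑ i ∈ range (D + 1), sphereSum G x v i = ∑ z, v z :=
  Finset.sum_fiberwise_of_maps_to
    (fun z _ => Finset.mem_range.mpr (Nat.lt_succ_of_le (h.le_diam x z))) v

theorem sum_neighborCount_mul_sphereSum [DecidableRel G.Adj] (h : IsDRG G D b c a) {θ : ℝ}
    {v : V → ℝ} (hv : (G.adjMatrix ℝ).mulVec v = θ • v) (x : V) (j : ℕ) :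
    ∑ i ∈ range (D + 1), neighborCount b c a i j * sphereSum G x v i = θ * sphereSum G x v j := by
  have h1 : ∑ i ∈ range (D + 1), neighborCount b c a i j * sphereSum G x v i =
      ∑ z, neighborCount b c a (G.dist x z) j * v z := by
    rw [← Finset.sum_fiberwise_of_maps_to (t := range (D + 1)) (g := fun z => G.dist x z)
      (fun z _ => Finset.mem_range.mpr (Nat.lt_succ_of_le (h.le_diam x z)))]
    refine Finset.sum_congr rfl fun i _ => ?_
    rw [sphereSum, Finset.mul_sum]
    refine Finset.sum_congr rfl fun z hz => ?_
    rw [(Finset.mem_filter.mp hz).2]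
  have h2 (y : V) : θ * v y = ∑ z ∈ G.neighborFinset y, v z := by
    rw [← adjMatrix_mulVec_apply, hv, Pi.smul_apply, smul_eq_mul]
  rw [h1, sphereSum, Finset.mul_sum]
  simp_rw [h2, ← h.card_neighbors_dist, Finset.card_filter, Nat.cast_sum, Finset.sum_mul,
    Finset.sum_filter]
  rw [Finset.sum_comm' (s' := fun y => G.neighborFinset y) (t' := univ)]
  · refine Finset.sum_congr rfl fun y _ => ?_
    split_ifs with hy <;> simp
  · simp [SimpleGraph.adj_comm]

end

variable {V : Type*} [Fintype V] {G : SimpleGraph V} [DecidableRel G.Adj] {b c a : ℕ → ℕ}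

theorem recurrence (h : IsDRG G 3 b c a) {θ : ℝ} {v : V → ℝ}
    (hv : (G.adjMatrix ℝ).mulVec v = θ • v) (x : V) :
    sphereSum G x v 1 = θ * v x ∧
    b 0 * v x + a 1 * sphereSum G x v 1 + c 2 * sphereSum G x v 2 = θ * sphereSum G x v 1 ∧
    b 1 * sphereSum G x v 1 + a 2 * sphereSum G x v 2 + c 3 * sphereSum G x v 3 =
      θ * sphereSum G x v 2 ∧
    b 2 * sphereSum G x v 2 + a 3 * sphereSum G x v 3 = θ * sphereSum G x v 3 := by
  have hr := h.sum_neighborCount_mul_sphereSum hv x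
  have h0 := hr 0
  have h1 := hr 1
  have h2 := hr 2
  have h3 := hr 3
  simp [Finset.sum_range_succ, neighborCount, h.a_zero, h.c_one, h.sphereSum_zero]
    at h0 h1 h2 h3
  exact ⟨h0, h1, h2, h3⟩

theorem valency_eq (h : IsDRG G 3 b c a) :
    1 + a 1 + b 1 = b 0 ∧ c 2 + a 2 + b 2 = b 0 ∧ c 3 + a 3 = b 0 := by
  have hr (i : ℕ) (hi : i ≤ 3) : ∑ j ∈ range 4, neighborCount b c a i j = b 0 := by
    obtain ⟨x, y, rfl⟩ := h.exists_dist_eq hi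
    exact h.sum_neighborCount x y
  have h1 := hr 1
  have h2 := hr 2
  have h3 := hr 3
  simp [Finset.sum_range_succ, neighborCount, h.c_one] at h1 h2 h3
  exact ⟨h1, h2, h3⟩

theorem c_mul_c_mul_sum (h : IsDRG G 3 b c a) {θ : ℝ} {v : V → ℝ}
    (hv : (G.adjMatrix ℝ).mulVec v = θ • v) (x : V) :
    c 2 * c 3 * ∑ z, v z = (c 2 * c 3 * (1 + θ) + (c 3 + θ - a 2) * ((θ - a 1) * θ - b 0) -
      c 2 * b 1 * θ) * v x := by
  obtain ⟨h0, h1, h2, -⟩ := h.recurrence hv x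
  rw [← h.sum_sphereSum x]
  simp only [Finset.sum_range_succ, Finset.sum_range_zero, h.sphereSum_zero]
  rw [h0] at h1 h2 ⊢
  linear_combination (c 3 + θ - a 2 : ℝ) * h1 + (c 2 : ℝ) * h2

theorem adjMatrix_mulVec_one (h : IsDRG G 3 b c a) :
    (G.adjMatrix ℝ).mulVec 1 = (b 0 : ℝ) • (1 : V → ℝ) := by
  ext x
  simp [h.degree_eq]

theorem eigMult_valency [DecidableEq V] (h : IsDRG G 3 b c a) : eigMult G (b 0) = 1 := by
  obtain ⟨x, -⟩ := h.exists_diam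
  have : Nonempty V := ⟨x⟩
  have hone := h.adjMatrix_mulVec_one
  rw [eigMult, finrank_eq_one_iff']
  refine ⟨⟨1, ?_⟩, ?_, ?_⟩
  · rw [Module.End.mem_eigenspace_iff, Matrix.toLin'_apply, hone]
  · exact fun h0 => one_ne_zero (congrArg Subtype.val h0)
  · rintro ⟨w, hw⟩
    rw [Module.End.mem_eigenspace_iff, Matrix.toLin'_apply] at hw
    refine ⟨w x, Subtype.ext (funext fun y => ?_)⟩
    have hx := h.c_mul_c_mul_sum hw x
    rw [h.c_mul_c_mul_sum hw y] at hx
    have hc : (c 2 * c 3 * ∑ _z : V, (1 : ℝ)) ≠ 0 := by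
      have h2 := h.c_succ_pos (i := 1) (by norm_num)
      have h3 := h.c_succ_pos (i := 2) (by norm_num)
      rw [Finset.sum_const, Finset.card_univ, nsmul_one]
      exact_mod_cast (Nat.mul_pos (Nat.mul_pos h2 h3) Fintype.card_pos).ne'
    have hc' := h.c_mul_c_mul_sum hone x
    simp only [Pi.one_apply, mul_one] at hc'
    rw [hc'] at hc
    simpa using (mul_left_cancel₀ hc hx).symm

theorem charpoly_eq_zero [DecidableEq V] (h : IsDRG G 3 b c a) {θ : ℝ} (hθ : IsEig G θ) :
    (θ - a 3) * ((θ - a 2) * ((θ - a 1) * θ - b 0) - b 1 * c 2 * θ) -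
      b 2 * c 3 * ((θ - a 1) * θ - b 0) = 0 := by
  obtain ⟨v, hv0, hv⟩ := hθ
  obtain ⟨x, hx⟩ := Function.ne_iff.mp hv0
  refine (mul_eq_zero.mp ?_).resolve_right hx
  obtain ⟨h0, h1, h2, h3⟩ := h.recurrence hv x
  rw [h0] at h1 h2
  linear_combination (b 2 * c 3 - (θ - a 3) * (θ - a 2) : ℝ) * h1 -
    (c 2 * (θ - a 3) : ℝ) * h2 - (c 2 * c 3 : ℝ) * h3

theorem sum_eigMult [DecidableEq V] (h : IsDRG G 3 b c a) {s : Finset ℝ}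
    (hs : ∀ θ, IsEig G θ → θ ∈ s) :
    ∑ θ ∈ s, (eigMult G θ : ℝ) = Fintype.card V ∧ ∑ θ ∈ s, eigMult G θ * θ = 0 ∧
      ∑ θ ∈ s, eigMult G θ * θ ^ 2 = Fintype.card V * b 0 := by
  have hA : (G.adjMatrix ℝ).IsHermitian := isHermitian_adjMatrix
  refine ⟨?_, ?_, ?_⟩
  · simpa using (sum_eigenvalues_eq_sum_eigMult hs fun _ => 1).symm
  · rw [← sum_eigenvalues_eq_sum_eigMult hs fun θ => θ, ← trace_adjMatrix (α := ℝ) (G := G),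
      hA.trace_eq_sum_eigenvalues]
    rfl
  · rw [← sum_eigenvalues_eq_sum_eigMult hs fun θ => θ ^ 2,
      ← hA.trace_mul_self_eq_sum_eigenvalues_sq, Matrix.trace]
    simp only [Matrix.diag_apply, adjMatrix_mul_self_apply_self, h.degree_eq, Finset.sum_const,
      Finset.card_univ, nsmul_eq_mul]

end IsDRG

/-- In a Shilla distance-regular graph the valency is divisible by `a 3`, with quotient
`a 3 - a 1`. -/
theorem IsShilla.valency_eq_mul {V : Type*} [Fintype V] [DecidableEq V] {G : SimpleGraph V}
    [DecidableRel G.Adj] {b c a : ℕ → ℕ} (h : IsShilla G b c a) :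
    (b 0 : ℝ) = a 3 * (a 3 - a 1) := by
  obtain ⟨v, hv0, hv⟩ := h.second.1
  obtain ⟨x, hx⟩ := Function.ne_iff.mp hv0
  obtain ⟨h0, h1, -, h3⟩ := h.drg.recurrence hv x
  have hb : (b 2 : ℝ) ≠ 0 := by exact_mod_cast (h.drg.b_pos (i := 2) (by norm_num)).ne'
  have hs : sphereSum G x v 2 = 0 := by simpa [hb] using h3
  refine mul_right_cancel₀ hx ?_
  rw [h0, hs] at h1
  linear_combination h1

/-- The multiplicity condition `m₂ = m₃` for a Shilla distance-regular graph with `b₂ = c₂`, in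
terms of `a = a₃`, `β = b(Γ)` and `c = c₂`. -/
theorem shilla_identity {a β c θ₂ θ₃ m m₁ n : ℝ} (ha : 0 < a) (hβ : 1 < β) (hc : c ≠ 0)
    (hsum : θ₂ + θ₃ = a - β - 2 * c) (hprod : θ₂ * θ₃ = c * (β + 1) - a * β)
    (hn : c * n = c * (1 + a * β + β * (a + 1)) + a * β * (a + 1) * (β - 1))
    (hm0 : 1 + m₁ + 2 * m = n) (hm1 : a * β + m₁ * a + m * (θ₂ + θ₃) = 0)
    (hm2 : (a * β) ^ 2 + m₁ * a ^ 2 + m * (θ₂ ^ 2 + θ₃ ^ 2) = n * (a * β)) :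
    2 * (2 * c - a) * (2 * c + (β - 1) * a) + (β - 1) * (2 * c - a) + β * (β - 1) - 4 * c = 0 := by
  have hsq : θ₂ ^ 2 + θ₃ ^ 2 = (a - β - 2 * c) ^ 2 - 2 * (c * (β + 1) - a * β) := by
    rw [← hsum, ← hprod]; ring
  rw [hsum] at hm1
  rw [hsq] at hm2
  have h0 : c * (a * β * (a + 1)) ≠ 0 := by positivity
  refine (mul_eq_zero.mp ?_).resolve_left h0
  have e1 : a * β + (n - 1) * a = m * (2 * a - (a - β - 2 * c)) := by
    linear_combination hm1 - a * hm0
  have e2 : (a * β) ^ 2 + (n - 1) * a ^ 2 - n * (a * β) =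
      m * (2 * a ^ 2 - ((a - β - 2 * c) ^ 2 - 2 * (c * (β + 1) - a * β))) := by
    linear_combination hm2 - a ^ 2 * hm0
  linear_combination
    c * (2 * a - (a - β - 2 * c)) * e2 -
    c * (2 * a ^ 2 - ((a - β - 2 * c) ^ 2 - 2 * (c * (β + 1) - a * β))) * e1 +
    (a * (2 * a ^ 2 - ((a - β - 2 * c) ^ 2 - 2 * (c * (β + 1) - a * β))) -
      (a ^ 2 - a * β) * (2 * a - (a - β - 2 * c))) * hn

theorem eq_of_shilla_identity {a β c : ℤ} (hβ : 2 ≤ β) (ha : β ≤ a) (hc : 0 < c)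
    (h : 2 * (2 * c - a) * (2 * c + (β - 1) * a) + (β - 1) * (2 * c - a) + β * (β - 1) - 4 * c = 0) :
    2 * c = a ∧ 4 * c = β * (β - 1) := by
  have hpos : 0 < (β - 1) * a := mul_pos (by lia) (by lia)
  have hle : β * (β - 1) ≤ (β - 1) * a := by nlinarith
  rcases lt_trichotomy (2 * c - a) 0 with hd | hd | hd
  · nlinarith [mul_nonneg (show 0 ≤ a - 2 * c - 1 by lia)
      (show 0 ≤ 2 * c + (β - 1) * a by lia), mul_nonneg (show 0 ≤ β - 1 by lia)
      (show 0 ≤ a - 2 * c by lia)]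
  · rw [hd] at h
    constructor <;> linarith
  · nlinarith [mul_nonneg (show 0 ≤ 2 * c - a - 1 by lia)
      (show 0 ≤ 2 * c + (β - 1) * a by lia), mul_nonneg (show 0 ≤ β - 1 by lia) hd.le,
      mul_nonneg (show 0 ≤ β - 1 by lia) (show 0 ≤ β by lia)]

/-- For a Shilla distance-regular graph with `b(Γ) = b ≥ 2`, `m₂ = m₃` and `b₂ = c₂`,
one has `a₃ = b(b-1)/2` (and `c₂ = b(b-1)/4`). -/
theorem stmt12 {V : Type*} [Fintype V] [DecidableEq V] (G : SimpleGraph V)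
    [DecidableRel G.Adj] (b c a : ℕ → ℕ) (hG : IsShilla G b c a)
    (β : ℕ) (hβ2 : 2 ≤ β) (hβ : a 3 = a 1 + β)
    (θ2 θ3 : ℝ) (h2 : IsEig G θ2) (h3 : IsEig G θ3)
    (h32 : θ3 < θ2) (h2a : θ2 < (a 3 : ℝ))
    (hall : ∀ θ : ℝ, IsEig G θ → θ = (b 0 : ℝ) ∨ θ = (a 3 : ℝ) ∨ θ = θ2 ∨ θ = θ3)
    (hmult : eigMult G θ2 = eigMult G θ3)
    (hb2c2 : b 2 = c 2) :
    2 * a 3 = β * (β - 1) ∧ 4 * c 2 = β * (β - 1) := by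
  have hd := hG.drg
  obtain ⟨hk1, hk2, hk3⟩ := hd.valency_eq
  have hk := hG.valency_eq_mul
  have hak := hG.second.2.1
  have hcpos : 0 < c 2 := hd.c_succ_pos (i := 1) (by norm_num)
  have ha1 : (a 1 : ℝ) = a 3 - β := by rw [hβ]; push_cast; ring
  have hb0 : (b 0 : ℝ) = a 3 * β := by rw [hk, ha1]; ring
  have hb1 : (b 1 : ℝ) = (a 3 + 1) * (β - 1) := by
    have : (1 + a 1 + b 1 : ℝ) = b 0 := mod_cast hk1
    linear_combination this - ha1 + hb0
  have ha2 : (a 2 : ℝ) = a 3 * β - 2 * c 2 := by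
    have : (c 2 + a 2 + c 2 : ℝ) = b 0 := by rw [hb2c2] at hk2; exact_mod_cast hk2
    linear_combination this + hb0
  have hc3 : (c 3 : ℝ) = a 3 * (β - 1) := by
    have : (c 3 + a 3 : ℝ) = b 0 := mod_cast hk3
    linear_combination this + hb0
  have hβ1 : (1 : ℝ) < β := by exact_mod_cast hβ2
  have ha3 : (0 : ℝ) < a 3 := by exact_mod_cast (by lia : 0 < a 3)
  have hc2 : (c 2 : ℝ) ≠ 0 := by exact_mod_cast hcpos.ne'
  have hquad (θ : ℝ) (hθ : IsEig G θ) (hlt : θ < a 3) :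
      θ ^ 2 - (a 3 - β - 2 * c 2) * θ + (c 2 * (β + 1) - a 3 * β) = 0 := by
    have hQ := hd.charpoly_eq_zero hθ
    rw [hb2c2, ha1, ha2, hb0, hb1, hc3] at hQ
    rw [hb0] at hak
    have hne : (θ - a 3 * β) * (θ - a 3) ≠ 0 :=
      mul_ne_zero (by linarith) (by linarith)
    refine (mul_eq_zero.mp ?_).resolve_left hne
    linear_combination hQ
  have hq2 := hquad θ2 h2 h2a
  have hq3 := hquad θ3 h3 (h32.trans h2a)
  have hsum : θ2 + θ3 = a 3 - β - 2 * c 2 := by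
    refine mul_left_cancel₀ (sub_ne_zero.mpr h32.ne') ?_
    linear_combination hq2 - hq3
  have hprod : θ2 * θ3 = c 2 * (β + 1) - a 3 * β := by
    linear_combination θ2 * hsum - hq2
  obtain ⟨x, -⟩ := hd.exists_diam
  have hn := hd.c_mul_c_mul_sum hd.adjMatrix_mulVec_one x
  simp only [Pi.one_apply, Finset.sum_const, Finset.card_univ, nsmul_one, mul_one] at hn
  rw [ha1, ha2, hb0, hb1, hc3] at hn
  have hn' : (c 2 : ℝ) * Fintype.card V =
      c 2 * (1 + a 3 * β + β * (a 3 + 1)) + a 3 * β * (a 3 + 1) * (β - 1) := by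
    refine mul_left_cancel₀ (mul_pos ha3 (sub_pos.mpr hβ1)).ne' ?_
    linear_combination hn
  have hs (θ : ℝ) (hθ : IsEig G θ) : θ ∈ ({(b 0 : ℝ), (a 3 : ℝ), θ2, θ3} : Finset ℝ) := by
    simpa using hall θ hθ
  have h2k := h2a.trans hak
  have hsplit (f : ℝ → ℝ) : ∑ θ ∈ ({(b 0 : ℝ), (a 3 : ℝ), θ2, θ3} : Finset ℝ), f θ =
      f (b 0) + (f (a 3) + (f θ2 + f θ3)) := by
    rw [Finset.sum_insert (by simp [hak.ne', h2k.ne', (h32.trans h2k).ne']),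
      Finset.sum_insert (by simp [h2a.ne', (h32.trans h2a).ne']), Finset.sum_pair h32.ne']
  obtain ⟨hm0, hm1, hm2⟩ := hd.sum_eigMult hs
  rw [hsplit, hd.eigMult_valency, hmult, Nat.cast_one, one_mul, hb0] at hm1 hm2
  rw [hsplit, hd.eigMult_valency, hmult, Nat.cast_one] at hm0
  have hJ := shilla_identity (m := eigMult G θ3) (m₁ := eigMult G (a 3)) ha3 hβ1 hc2 hsum hprod hn'
    (by linear_combination hm0) (by linear_combination hm1) (by linear_combination hm2)
  obtain ⟨h2c, h4c⟩ := eq_of_shilla_identity (a := a 3) (β := β) (c := c 2) (by lia) (by lia)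
    (by lia) (by exact_mod_cast hJ)
  zify [show 1 ≤ β by lia]
  exact ⟨by linarith, h4c⟩
end

section
/- Let Γ be a Shilla distance-regular graph with b = b(Γ). Then q²₁₁ > 0, and q³₁₁ ≥ 0 if and only if θ₃ ≥ -b(b·b₂ + c₂)/(b₂ + c₂). In particular θ₃ ≥ -b(b·b₂+c₂)/(b₂+c₂) always holds. -/
open Finset SimpleGraph

/-- The standard sequence `u₀, u₁, u₂, u₃` associated to the eigenvalue `θ` of a
distance-regular graph of diameter `3` with intersection numbers `b, c, a`. -/
noncomputable def stdSeq (b c a : ℕ → ℕ) (θ : ℝ) : ℕ → ℝ := fun l =>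
  match l with
  | 0 => 1
  | 1 => θ / b 0
  | 2 => ((θ - a 1) * (θ / b 0) - c 1) / b 1
  | 3 => ((θ - a 2) * (((θ - a 1) * (θ / b 0) - c 1) / b 1) - c 2 * (θ / b 0)) / b 2
  | _ => 0

/-- The number `k_l` of vertices at distance `l` from a fixed vertex, for a
distance-regular graph of diameter `3`. -/
noncomputable def kdist (b c : ℕ → ℕ) : ℕ → ℝ := fun l =>
  match l with
  | 0 => 1
  | 1 => b 0
  | 2 => b 0 * b 1 / c 2
  | 3 => b 0 * b 1 * b 2 / (c 2 * c 3)
  | _ => 0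

/-- The Krein parameter `q^i_{11}` of a distance-regular graph of diameter `3` with `n`
vertices, where `m1` is the multiplicity of `θ1` and `θi` is the `i`-th eigenvalue:
`q^i_{11} = (m1 * m1 / n) * Σ_l k_l u_l(θ1)^2 u_l(θi)`. -/
noncomputable def krein11 (n m1 : ℕ) (b c a : ℕ → ℕ) (θ1 θi : ℝ) : ℝ :=
  ((m1 : ℝ) * m1 / n) *
    ∑ l ∈ Finset.range 4, kdist b c l * (stdSeq b c a θ1 l) ^ 2 * stdSeq b c a θi l

/-- For a distance-regular graph of diameter `3` with eigenvalues
`k > θ1 > θ2 > θ3`, being `Q`-polynomial with respect to `θ1` is equivalent to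
`q²₁₁ = 0` or `q³₁₁ = 0`. -/
def IsQPolyTheta1 (n m1 : ℕ) (b c a : ℕ → ℕ) (θ1 θ2 θ3 : ℝ) : Prop :=
  krein11 n m1 b c a θ1 θ2 = 0 ∨ krein11 n m1 b c a θ1 θ3 = 0

open scoped Matrix

section DistanceRegular

variable {V : Type*} [Fintype V] {G : SimpleGraph V} {D : ℕ} {b c a : ℕ → ℕ}

theorem natCard_setOf_adj_eq_sum [DecidableRel G.Adj] (y : V) (p : V → Prop) [DecidablePred p] :
    (Nat.card {z : V | G.Adj y z ∧ p z} : ℝ) =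
      ∑ z ∈ G.neighborFinset y, if p z then (1 : ℝ) else 0 := by
  rw [Finset.sum_boole]
  congr 1
  exact Nat.subtype_card _ fun z => by simp

/-- The sum of a function of the distance from `x` over the neighbours of `y`. -/
theorem IsDRG.sum_neighborFinset [DecidableRel G.Adj] (h : IsDRG G D b c a) (f : ℕ → ℝ)
    {x y : V} {l : ℕ} (hl : G.dist x y = l) :
    ∑ z ∈ G.neighborFinset y, f (G.dist x z) =
      c l * f (l - 1) + a l * f l + b l * f (l + 1) := by
  have hD : l ≤ D := hl ▸ h.le_diam x y
  rw [← h.card_c l hD x y hl, ← h.card_a l hD x y hl, ← h.card_b l hD x y hl,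
    natCard_setOf_adj_eq_sum, natCard_setOf_adj_eq_sum, natCard_setOf_adj_eq_sum,
    Finset.sum_mul, Finset.sum_mul, Finset.sum_mul, ← Finset.sum_add_distrib,
    ← Finset.sum_add_distrib]
  refine Finset.sum_congr rfl fun z hz => ?_
  have hyz : G.Adj y z := by simpa using hz
  have hd := hyz.diff_dist_adj (u := x)
  rw [hl] at hd
  rcases Nat.eq_zero_or_pos l with rfl | hpos
  · obtain rfl : x = y := h.connected.dist_eq_zero_iff.mp hl
    have : G.dist x z = 1 := dist_eq_one_iff_adj.mpr hyz
    simp [this]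
  · rcases hd with hd | hd | hd <;> rw [hd]
    · simp [show l ≠ l - 1 by omega]
    · simp [show l + 1 ≠ l - 1 by omega]
    · simp [show l - 1 ≠ l by omega, show l - 1 ≠ l + 1 by omega]

/-- The action of the adjacency operator transported to functions of the distance. -/
theorem IsDRG.sum_mul_eigenvector [DecidableEq V] [DecidableRel G.Adj] (h : IsDRG G D b c a)
    {v : V → ℝ} {θ : ℝ} (hv : G.adjMatrix ℝ *ᵥ v = θ • v) (f : ℕ → ℝ) (x : V) :
    θ * ∑ z, f (G.dist x z) * v z =
      ∑ y, (c (G.dist x y) * f (G.dist x y - 1) + a (G.dist x y) * f (G.dist x y)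
        + b (G.dist x y) * f (G.dist x y + 1)) * v y := by
  have h1 : θ * ∑ z, f (G.dist x z) * v z = (fun z => f (G.dist x z)) ⬝ᵥ (G.adjMatrix ℝ *ᵥ v) := by
    rw [hv, dotProduct_smul, smul_eq_mul, dotProduct]
  rw [h1, Matrix.dotProduct_mulVec, ← Matrix.mulVec_transpose, transpose_adjMatrix, dotProduct]
  refine Finset.sum_congr rfl fun y _ => ?_
  rw [adjMatrix_mulVec_apply, h.sum_neighborFinset f rfl]

/-- A geodesic of length the diameter. -/
theorem IsDRG.exists_geodesic (h : IsDRG G D b c a) :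
    ∃ (x : V) (p : ℕ → V), (∀ i ≤ D, G.dist x (p i) = i) ∧ ∀ i < D, G.Adj (p i) (p (i + 1)) := by
  obtain ⟨x, y, hxy⟩ := h.exists_diam
  obtain ⟨p, hp⟩ := h.connected.exists_walk_length_eq_dist x y
  refine ⟨x, p.getVert, fun i hi => ?_, fun i hi => p.adj_getVert_succ (by omega)⟩
  have h1 := dist_le (p.take i)
  have h2 := dist_le (p.drop i)
  have h3 := h.connected.dist_triangle (u := x) (v := p.getVert i) (w := y)
  rw [Walk.take_length] at h1
  rw [Walk.drop_length] at h2
  omega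

theorem IsDRG.b_pos_and_c_pos (h : IsDRG G D b c a) {i : ℕ} (hi : i < D) :
    0 < b i ∧ 0 < c (i + 1) := by
  obtain ⟨x, p, hdist, hadj⟩ := h.exists_geodesic
  rw [← h.card_b i hi.le x _ (hdist i hi.le), ← h.card_c (i + 1) hi x _ (hdist (i + 1) hi)]
  exact ⟨Nat.card_pos_iff.mpr ⟨⟨_, hadj i hi, hdist _ hi⟩, inferInstance⟩,
    Nat.card_pos_iff.mpr ⟨⟨_, (hadj i hi).symm, hdist _ hi.le⟩, inferInstance⟩⟩

theorem IsDRG.exists_dist_eq_s14 (h : IsDRG G D b c a) {i : ℕ} (hi : i ≤ D) :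
    ∃ x y : V, G.dist x y = i := by
  obtain ⟨x, p, hdist, -⟩ := h.exists_geodesic
  exact ⟨x, p i, hdist i hi⟩

theorem IsDRG.c_zero (h : IsDRG G D b c a) : c 0 = 0 := by
  obtain ⟨x, -, -⟩ := h.exists_diam
  rw [← h.card_c 0 (Nat.zero_le _) x x dist_self, Nat.card_eq_zero]
  refine Or.inl ⟨fun ⟨z, hz, hz0⟩ => ?_⟩
  rw [dist_eq_one_iff_adj.mpr hz] at hz0
  omega

theorem IsDRG.a_zero_s14 (h : IsDRG G D b c a) : a 0 = 0 := by
  obtain ⟨x, -, -⟩ := h.exists_diam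
  rw [← h.card_a 0 (Nat.zero_le _) x x dist_self, Nat.card_eq_zero]
  refine Or.inl ⟨fun ⟨z, hz, hz0⟩ => ?_⟩
  rw [dist_eq_one_iff_adj.mpr hz] at hz0
  omega

theorem IsDRG.b_diam (h : IsDRG G D b c a) : b D = 0 := by
  obtain ⟨x, y, hxy⟩ := h.exists_diam
  rw [← h.card_b D le_rfl x y hxy, Nat.card_eq_zero]
  refine Or.inl ⟨fun ⟨z, _, hz⟩ => ?_⟩
  have := h.le_diam x z
  omega

theorem IsDRG.c_one_s14 (h : IsDRG G D b c a) (hD : 1 ≤ D) : c 1 = 1 := by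
  obtain ⟨x, y, hxy⟩ := h.exists_dist_eq_s14 hD
  rw [← h.card_c 1 hD x y hxy, Nat.card_eq_one_iff_exists]
  refine ⟨⟨x, (dist_eq_one_iff_adj.mp hxy).symm, dist_self⟩, fun ⟨z, _, hz⟩ => ?_⟩
  exact Subtype.ext (h.connected.dist_eq_zero_iff.mp hz).symm

theorem IsDRG.c_add_a_add_b (h : IsDRG G D b c a) {i : ℕ} (hi : i ≤ D) :
    (c i + a i + b i : ℝ) = b 0 := by
  classical
  obtain ⟨x, y, hxy⟩ := h.exists_dist_eq_s14 hi
  have h1 := h.sum_neighborFinset (fun _ => 1) hxy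
  have h2 := h.sum_neighborFinset (fun _ => 1) (dist_self (G := G) (v := y))
  simp only [h.c_zero, h.a_zero_s14, mul_one, Nat.cast_zero, zero_add] at h1 h2
  rw [← h1, h2]

theorem IsDRG.stdSeq_valency (h : IsDRG G 3 b c a) {l : ℕ} (hl : l < 4) :
    stdSeq b c a (b 0) l = 1 := by
  have hb0 : (b 0 : ℝ) ≠ 0 := mod_cast (h.b_pos_and_c_pos (i := 0) (by norm_num)).1.ne'
  have hb1 : (b 1 : ℝ) ≠ 0 := mod_cast (h.b_pos_and_c_pos (i := 1) (by norm_num)).1.ne'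
  have hb2 : (b 2 : ℝ) ≠ 0 := mod_cast (h.b_pos_and_c_pos (i := 2) (by norm_num)).1.ne'
  have h1 := h.c_add_a_add_b (i := 1) (by norm_num)
  have h2 := h.c_add_a_add_b (i := 2) (by norm_num)
  have hu : ((b 0 - a 1) * 1 - c 1 : ℝ) / b 1 = 1 := by
    rw [div_eq_one_iff_eq hb1]; linear_combination -h1
  interval_cases l
  · rfl
  · exact div_self hb0
  · simp only [stdSeq, div_self hb0]; exact hu
  · simp only [stdSeq, div_self hb0, hu]
    rw [div_eq_one_iff_eq hb2]; linear_combination -h2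

end DistanceRegular

section DiameterThree

variable {V : Type*} [Fintype V] [DecidableEq V] {G : SimpleGraph V} [DecidableRel G.Adj]
  {b c a : ℕ → ℕ}

/-- An eigenvector for `θ` is multiplied by `k_l u_l(θ)` under summation over the vertices at
distance `l`, and `u_3(θ)` satisfies the last equation of the three-term recurrence. -/
theorem IsDRG.sum_dist_mul_eigenvector (h : IsDRG G 3 b c a) {v : V → ℝ} {θ : ℝ}
    (hv : G.adjMatrix ℝ *ᵥ v = θ • v) (f : ℕ → ℝ) (x : V) :
    ∑ z, f (G.dist x z) * v z =
        (∑ l ∈ Finset.range 4, kdist b c l * stdSeq b c a θ l * f l) * v x ∧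
      (θ - a 3) * stdSeq b c a θ 3 * v x = c 3 * stdSeq b c a θ 2 * v x := by
  have hb0 : (b 0 : ℝ) ≠ 0 := mod_cast (h.b_pos_and_c_pos (i := 0) (by norm_num)).1.ne'
  have hb1 : (b 1 : ℝ) ≠ 0 := mod_cast (h.b_pos_and_c_pos (i := 1) (by norm_num)).1.ne'
  have hb2 : (b 2 : ℝ) ≠ 0 := mod_cast (h.b_pos_and_c_pos (i := 2) (by norm_num)).1.ne'
  have hc2 : (c 2 : ℝ) ≠ 0 := mod_cast (h.b_pos_and_c_pos (i := 1) (by norm_num)).2.ne'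
  have hc3 : (c 3 : ℝ) ≠ 0 := mod_cast (h.b_pos_and_c_pos (i := 2) (by norm_num)).2.ne'
  have hc1 := h.c_one_s14 (by norm_num)
  set S : ℕ → ℝ := fun l => ∑ z, (if G.dist x z = l then v z else 0) with hS
  have hsum : ∀ g : ℕ → ℝ, ∑ z, g (G.dist x z) * v z =
      g 0 * S 0 + g 1 * S 1 + g 2 * S 2 + g 3 * S 3 := by
    intro g
    simp only [hS, Finset.mul_sum, ← Finset.sum_add_distrib]
    refine Finset.sum_congr rfl fun z _ => ?_
    have := h.le_diam x z
    interval_cases G.dist x z <;> simp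
  have hrec : ∀ g : ℕ → ℝ, θ * (g 0 * S 0 + g 1 * S 1 + g 2 * S 2 + g 3 * S 3) =
      (b 0 * g 1) * S 0 + (g 0 + a 1 * g 1 + b 1 * g 2) * S 1
      + (c 2 * g 1 + a 2 * g 2 + b 2 * g 3) * S 2 + (c 3 * g 2 + a 3 * g 3) * S 3 := by
    intro g
    have h1 := h.sum_mul_eigenvector hv g x
    rw [hsum g, hsum fun l => c l * g (l - 1) + a l * g l + b l * g (l + 1)] at h1
    simpa [h.c_zero, h.a_zero_s14, h.b_diam, hc1] using h1
  have hS0 : S 0 = v x := by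
    simp [hS, h.connected.dist_eq_zero_iff]
  have e0 := hrec fun l => if l = 0 then 1 else 0
  have e1 := hrec fun l => if l = 1 then 1 else 0
  have e2 := hrec fun l => if l = 2 then 1 else 0
  have e3 := hrec fun l => if l = 3 then 1 else 0
  simp only [hS0] at e0 e1 e2 e3
  norm_num at e0 e1 e2 e3
  have hS1 : S 1 = θ * v x := e0.symm
  have hS2 : S 2 = kdist b c 2 * stdSeq b c a θ 2 * v x := by
    simp only [kdist, stdSeq, hc1]
    rw [hS1] at e1
    field_simp
    push_cast
    linear_combination -e1
  have hS3 : S 3 = kdist b c 3 * stdSeq b c a θ 3 * v x := by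
    have : S 3 = ((θ - a 2) * S 2 - b 1 * S 1) / c 3 := by
      field_simp
      linear_combination -e2
    rw [this, hS2, hS1]
    simp only [kdist, stdSeq, hc1]
    field_simp
  refine ⟨?_, ?_⟩
  · rw [hsum, hS0, hS1, hS2, hS3]
    simp only [Finset.sum_range_succ, Finset.sum_range_zero, kdist, stdSeq]
    field_simp
    ring
  · have hk : (b 0 * b 1 * b 2 / (c 2 * c 3) : ℝ) ≠ 0 := by positivity
    refine mul_left_cancel₀ hk ?_
    rw [hS2, hS3] at e3
    have hk2 : b 2 * kdist b c 2 = b 0 * b 1 * b 2 / (c 2 * c 3) * c 3 := by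
      simp only [kdist]; field_simp
    have hk3 : kdist b c 3 = b 0 * b 1 * b 2 / (c 2 * c 3) := rfl
    rw [hk3] at e3
    linear_combination e3 + stdSeq b c a θ 2 * v x * hk2

theorem IsDRG.last_recurrence (h : IsDRG G 3 b c a) {θ : ℝ} (hθ : IsEig G θ) :
    (θ - a 3) * stdSeq b c a θ 3 = c 3 * stdSeq b c a θ 2 := by
  obtain ⟨v, hv0, hv⟩ := hθ
  obtain ⟨x, hx⟩ := Function.ne_iff.mp hv0
  exact mul_right_cancel₀ hx (h.sum_dist_mul_eigenvector hv 0 x).2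

/-- `kdist` counts the vertices at each distance from `x`. -/
theorem IsDRG.sum_dist (h : IsDRG G 3 b c a) (f : ℕ → ℝ) (x : V) :
    ∑ z, f (G.dist x z) = ∑ l ∈ Finset.range 4, kdist b c l * f l := by
  have hv : G.adjMatrix ℝ *ᵥ (fun _ => 1) = (b 0 : ℝ) • fun _ => (1 : ℝ) := by
    funext y
    rw [adjMatrix_mulVec_apply, h.sum_neighborFinset (fun _ => 1) (dist_self (v := y))]
    simp [h.c_zero, h.a_zero_s14]
  have h1 := (h.sum_dist_mul_eigenvector hv f x).1
  simp only [mul_one] at h1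
  rw [h1]
  refine Finset.sum_congr rfl fun l hl => ?_
  rw [h.stdSeq_valency (Finset.mem_range.mp hl), mul_one]

/-- Up to a positive scalar, the primitive idempotent attached to `θ`. -/
noncomputable def cosineMatrix (G : SimpleGraph V) (b c a : ℕ → ℕ) (θ : ℝ) : Matrix V V ℝ :=
  Matrix.of fun x y => stdSeq b c a θ (G.dist x y)

theorem IsDRG.adjMatrix_mulVec_stdSeq (h : IsDRG G 3 b c a) {θ : ℝ} (hθ : IsEig G θ) (y : V) :
    G.adjMatrix ℝ *ᵥ (fun z => stdSeq b c a θ (G.dist y z)) =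
      θ • fun z => stdSeq b c a θ (G.dist y z) := by
  have hb0 : (b 0 : ℝ) ≠ 0 := mod_cast (h.b_pos_and_c_pos (i := 0) (by norm_num)).1.ne'
  have hb1 : (b 1 : ℝ) ≠ 0 := mod_cast (h.b_pos_and_c_pos (i := 1) (by norm_num)).1.ne'
  have hb2 : (b 2 : ℝ) ≠ 0 := mod_cast (h.b_pos_and_c_pos (i := 2) (by norm_num)).1.ne'
  have hlast := h.last_recurrence hθ
  funext x
  rw [adjMatrix_mulVec_apply, h.sum_neighborFinset _ rfl, Pi.smul_apply, smul_eq_mul]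
  have := h.le_diam y x
  interval_cases G.dist y x
  · simp [stdSeq, h.c_zero, h.a_zero_s14, mul_div_cancel₀ _ hb0]
  · simp only [stdSeq]; field_simp; ring
  · simp only [stdSeq]; field_simp; ring
  · simp only [h.b_diam]
    push_cast
    linear_combination -hlast

theorem IsDRG.posSemidef_cosineMatrix (h : IsDRG G 3 b c a) {θ : ℝ} (hθ : IsEig G θ) :
    (cosineMatrix G b c a θ).PosSemidef := by
  set s := ∑ l ∈ Finset.range 4, kdist b c l * stdSeq b c a θ l * stdSeq b c a θ l
  have hs : 0 < s := by
    refine Finset.sum_pos' (fun l hl => ?_) ⟨0, by simp, by simp [kdist, stdSeq]⟩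
    rw [mul_assoc]
    refine mul_nonneg ?_ (mul_self_nonneg _)
    have := Finset.mem_range.mp hl
    interval_cases l <;> simp only [kdist] <;> positivity
  have hsymm : (cosineMatrix G b c a θ)ᴴ = cosineMatrix G b c a θ := by
    ext x y
    simp [cosineMatrix, dist_comm]
  have hsq : (cosineMatrix G b c a θ)ᴴ * cosineMatrix G b c a θ =
      s • cosineMatrix G b c a θ := by
    rw [hsymm]
    ext x y
    have h1 := (h.sum_dist_mul_eigenvector (h.adjMatrix_mulVec_stdSeq hθ y)
      (stdSeq b c a θ) x).1
    simpa [cosineMatrix, Matrix.mul_apply, dist_comm (u := y)] using h1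
  have h2 : cosineMatrix G b c a θ =
      s⁻¹ • ((cosineMatrix G b c a θ)ᴴ * cosineMatrix G b c a θ) := by
    rw [hsq, smul_smul, inv_mul_cancel₀ hs.ne', one_smul]
  rw [h2]
  exact (Matrix.posSemidef_conjTranspose_mul_self _).smul (inv_nonneg.mpr hs.le)

/-- The Krein condition, up to the positive factor relating it to the Krein parameters. -/
theorem IsDRG.sum_kdist_mul_stdSeq_nonneg (h : IsDRG G 3 b c a) {θ η : ℝ} (hθ : IsEig G θ)
    (hη : IsEig G η) :
    0 ≤ ∑ l ∈ Finset.range 4, kdist b c l * (stdSeq b c a θ l) ^ 2 * stdSeq b c a η l := by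
  obtain ⟨x₀, -, -⟩ := h.exists_diam
  have hpos := ((h.posSemidef_cosineMatrix hθ).hadamard (h.posSemidef_cosineMatrix hθ)).hadamard
    (h.posSemidef_cosineMatrix hη)
  have h1 := hpos.dotProduct_mulVec_nonneg (fun _ => 1)
  have hrow : ∀ x : V, ∑ y, stdSeq b c a θ (G.dist x y) * stdSeq b c a θ (G.dist x y) *
      stdSeq b c a η (G.dist x y) =
      ∑ l ∈ Finset.range 4, kdist b c l * (stdSeq b c a θ l) ^ 2 * stdSeq b c a η l := by
    intro x
    rw [h.sum_dist (fun l => stdSeq b c a θ l * stdSeq b c a θ l * stdSeq b c a η l) x]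
    exact Finset.sum_congr rfl fun l _ => by ring
  simp only [dotProduct, Matrix.mulVec, Matrix.hadamard_apply, cosineMatrix, Matrix.of_apply,
    Pi.star_apply, star_one, one_mul, mul_one, hrow, Finset.sum_const, Finset.card_univ,
    nsmul_eq_mul] at h1
  have : 0 < (Fintype.card V : ℝ) := mod_cast Fintype.card_pos_iff.mpr ⟨x₀⟩
  exact nonneg_of_mul_nonneg_right h1 this

theorem IsEig.eigMult_pos {θ : ℝ} (hθ : IsEig G θ) : 0 < eigMult G θ := by
  obtain ⟨v, hv0, hv⟩ := hθ
  have hmem : v ∈ Module.End.eigenspace (Matrix.toLin' (G.adjMatrix ℝ)) θ := by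
    rw [Module.End.mem_eigenspace_iff, Matrix.toLin'_apply, hv]
  exact Module.finrank_pos_iff_exists_ne_zero.mpr ⟨⟨v, hmem⟩, by simpa using hv0⟩

/-- For a Shilla graph, `a₃ b(Γ)` is the valency. -/
theorem IsShilla.b_zero_eq (hG : IsShilla G b c a) {β : ℕ} (hβ : a 3 = a 1 + β) :
    (b 0 : ℝ) = β * a 3 := by
  have h := hG.drg
  have hb0 : (b 0 : ℝ) ≠ 0 := mod_cast (h.b_pos_and_c_pos (i := 0) (by norm_num)).1.ne'
  have hb1 : (b 1 : ℝ) ≠ 0 := mod_cast (h.b_pos_and_c_pos (i := 1) (by norm_num)).1.ne'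
  have hc3 : (c 3 : ℝ) ≠ 0 := mod_cast (h.b_pos_and_c_pos (i := 2) (by norm_num)).2.ne'
  have hβ' : (a 3 : ℝ) = a 1 + β := mod_cast hβ
  have h1 := h.last_recurrence hG.second.1
  rw [sub_self, zero_mul, eq_comm, mul_eq_zero, or_iff_right hc3] at h1
  simp only [stdSeq, h.c_one_s14 (by norm_num)] at h1
  field_simp at h1
  push_cast at h1
  linear_combination -h1 + (a 3 : ℝ) * hβ'

/-- The Krein sum of a Shilla graph is linear in the eigenvalue. -/
theorem IsShilla.sum_kdist_mul_stdSeq (hG : IsShilla G b c a) {β : ℕ} (hβ : a 3 = a 1 + β)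
    {θ : ℝ} (hθ : IsEig G θ) (hθa : θ ≠ a 3) :
    ∑ l ∈ Finset.range 4, kdist b c l * (stdSeq b c a (a 3) l) ^ 2 * stdSeq b c a θ l =
      (β * (β * b 2 + c 2) + (b 2 + c 2) * θ) / (β ^ 2 * b 2) := by
  have h := hG.drg
  have hb0 : (b 0 : ℝ) ≠ 0 := mod_cast (h.b_pos_and_c_pos (i := 0) (by norm_num)).1.ne'
  have hb1 : (b 1 : ℝ) ≠ 0 := mod_cast (h.b_pos_and_c_pos (i := 1) (by norm_num)).1.ne'
  have hb2 : (b 2 : ℝ) ≠ 0 := mod_cast (h.b_pos_and_c_pos (i := 2) (by norm_num)).1.ne'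
  have hc2 : (c 2 : ℝ) ≠ 0 := mod_cast (h.b_pos_and_c_pos (i := 1) (by norm_num)).2.ne'
  have hc3 : (c 3 : ℝ) ≠ 0 := mod_cast (h.b_pos_and_c_pos (i := 2) (by norm_num)).2.ne'
  have hk := hG.b_zero_eq hβ
  have hβ' : (a 1 : ℝ) = a 3 - β := by rw [hβ]; push_cast; ring
  have hβ0 : (β : ℝ) ≠ 0 := fun h0 => hb0 (by rw [hk, h0, zero_mul])
  have ha3 : (a 3 : ℝ) ≠ 0 := fun h0 => hb0 (by rw [hk, h0, mul_zero])
  have hu1 : stdSeq b c a (a 3) 1 = 1 / β := by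
    simp only [stdSeq, hk]; field_simp
  have hu2 : stdSeq b c a (a 3) 2 = 0 := by
    have h1 := h.last_recurrence hG.second.1
    rwa [sub_self, zero_mul, eq_comm, mul_eq_zero, or_iff_right hc3] at h1
  have hu3 : stdSeq b c a (a 3) 3 = -c 2 / (β * b 2) := by
    have : stdSeq b c a (a 3) 3 =
      ((a 3 - a 2) * stdSeq b c a (a 3) 2 - c 2 * stdSeq b c a (a 3) 1) / b 2 := rfl
    rw [this, hu2, hu1]; field_simp; ring
  have hw2 : stdSeq b c a θ 2 = (θ - a 3) * (θ + β) / (b 0 * b 1) := by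
    simp only [stdSeq, h.c_one_s14 (by norm_num), hβ']
    field_simp
    push_cast
    linear_combination -hk
  have hw3 : stdSeq b c a θ 3 = c 3 * (θ + β) / (b 0 * b 1) := by
    refine mul_left_cancel₀ (sub_ne_zero.mpr hθa) ?_
    rw [h.last_recurrence hθ, hw2]
    ring
  simp only [Finset.sum_range_succ, Finset.sum_range_zero, hu1, hu2, hu3, hw3]
  simp only [kdist, stdSeq]
  field_simp
  ring

end DiameterThree

/-- For a Shilla distance-regular graph with `b = b(Γ)`: `q²₁₁ > 0`, and
`q³₁₁ ≥ 0 ↔ θ₃ ≥ -b(b·b₂+c₂)/(b₂+c₂)`; in particular the latter bound always holds. -/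
theorem stmt14 {V : Type*} [Fintype V] [DecidableEq V] (G : SimpleGraph V)
    [DecidableRel G.Adj] (b c a : ℕ → ℕ) (hG : IsShilla G b c a)
    (β : ℕ) (hβ : a 3 = a 1 + β)
    (θ2 θ3 : ℝ) (h2 : IsEig G θ2) (h3 : IsEig G θ3)
    (h32 : θ3 < θ2) (h2a : θ2 < (a 3 : ℝ))
    (hall : ∀ θ : ℝ, IsEig G θ → θ = (b 0 : ℝ) ∨ θ = (a 3 : ℝ) ∨ θ = θ2 ∨ θ = θ3)
    (n : ℕ) (hn : Fintype.card V = n) (m1 : ℕ) (hm1 : eigMult G ((a 3 : ℝ)) = m1) :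
    0 < krein11 n m1 b c a ((a 3 : ℝ)) θ2 ∧
    (0 ≤ krein11 n m1 b c a ((a 3 : ℝ)) θ3 ↔
      θ3 ≥ -((β : ℝ) * ((β : ℝ) * b 2 + c 2)) / ((b 2 : ℝ) + c 2)) ∧
    θ3 ≥ -((β : ℝ) * ((β : ℝ) * b 2 + c 2)) / ((b 2 : ℝ) + c 2) := by
  have h := hG.drg
  have hb2 : (0 : ℝ) < b 2 := mod_cast (h.b_pos_and_c_pos (i := 2) (by norm_num)).1
  have hb0 : (b 0 : ℝ) ≠ 0 := mod_cast (h.b_pos_and_c_pos (i := 0) (by norm_num)).1.ne'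
  have hβ0 : (β : ℝ) ≠ 0 := fun h0 => hb0 (by rw [hG.b_zero_eq hβ, h0, zero_mul])
  have hn0 : 0 < n := by
    obtain ⟨x, -, -⟩ := h.exists_diam
    exact hn ▸ Fintype.card_pos_iff.mpr ⟨x⟩
  have hm0 : 0 < m1 := hm1 ▸ hG.second.1.eigMult_pos
  have hfac : (0 : ℝ) < m1 * m1 / n := by positivity
  have hden : (0 : ℝ) < β ^ 2 * b 2 := by positivity
  have hbc : (0 : ℝ) < b 2 + c 2 := by positivity
  have hbound : θ3 ≥ -((β : ℝ) * ((β : ℝ) * b 2 + c 2)) / ((b 2 : ℝ) + c 2) := by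
    have h1 := h.sum_kdist_mul_stdSeq_nonneg hG.second.1 h3
    rw [hG.sum_kdist_mul_stdSeq hβ h3 (h32.trans h2a).ne, le_div_iff₀ hden] at h1
    rw [ge_iff_le, div_le_iff₀ hbc]
    linarith
  refine ⟨mul_pos hfac ?_, iff_of_true
    (mul_nonneg hfac.le (h.sum_kdist_mul_stdSeq_nonneg hG.second.1 h3)) hbound, hbound⟩
  rw [hG.sum_kdist_mul_stdSeq hβ h2 h2a.ne]
  refine div_pos ?_ hden
  have h1 := hbound.trans_lt h32
  rw [div_lt_iff₀ hbc] at h1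
  linarith
end
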